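/- H-Theorem for the hard-sphere Boltzmann equation: Let f ∈ C¹([0,T]×ℝ³×ℝ³) be strictly positive and solve the hard-sphere Boltzmann equation ∂_t f + v·∇_x f = Q(f,f) pointwise. Assume there are constants 0 < c₁ ≤ c₂ and 0 < β₂ ≤ β₁ such that c₁ e^{-β₁(|x|²+|v|²)} ≤ f(t,x,v) ≤ c₂ e^{-β₂(|x|²+|v|²)} and |∂_t f| + |∇_x f| + |∇_v f| ≤ c₂ e^{-β₂(|x|²+|v|²)} for all (t,x,v) ∈ [0,T]×ℝ³×ℝ³. Then the H-functional H(f(t)) := ∫_{ℝ³×ℝ³} f(t,x,v)[log f(t,x,v) − 1] dx dv is well defined and nonincreasing on [0,T]; in particular H(f(t)) ≤ H(f(0)) for all 0 ≤ t ≤ T. -/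

import Mathlib

open MeasureTheory Real Metric
open scoped ENNReal RealInnerProductSpace

noncomputable section

/-- Three-dimensional Euclidean space. -/
abbrev V3 := EuclideanSpace ℝ (Fin 3)

/-- The `j`-particle phase space `(ℝ³ × ℝ³)^j`. -/
abbrev Phase (j : ℕ) := Fin j → V3 × V3

/-- The surface measure on the unit sphere `S² ⊂ ℝ³`. -/
def sphereMeasure : Measure (sphere (0 : V3) 1) := (volume : Measure V3).toSphere

/-- The gain part `C⁺_{k,j+1}` of the Boltzmann hierarchy collision operator. -/
def collGain (j : ℕ) (k : Fin j) (g : Phase (j + 1) → ℝ) (z : Phase j) : ℝ :=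
  ∫ ω : sphere (0 : V3) 1, ∫ v : V3,
    (if 0 ≤ ⟪(ω : V3), (z k).2 - v⟫ then
      ⟪(ω : V3), (z k).2 - v⟫ *
        g (Fin.snoc
            (Function.update z k
              ((z k).1, (z k).2 - ⟪(z k).2 - v, (ω : V3)⟫ • (ω : V3)))
            ((z k).1, v + ⟪(z k).2 - v, (ω : V3)⟫ • (ω : V3)))
    else 0) ∂volume ∂sphereMeasure

/-- The loss part `C⁻_{k,j+1}` of the Boltzmann hierarchy collision operator. -/
def collLoss (j : ℕ) (k : Fin j) (g : Phase (j + 1) → ℝ) (z : Phase j) : ℝ :=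
  ∫ ω : sphere (0 : V3) 1, ∫ v : V3,
    (if 0 ≤ ⟪(ω : V3), (z k).2 - v⟫ then
      ⟪(ω : V3), (z k).2 - v⟫ * g (Fin.snoc z ((z k).1, v))
    else 0) ∂volume ∂sphereMeasure

/-- The Boltzmann hierarchy collision operator `C_{j+1} = Σ_k (C⁺_{k,j+1} − C⁻_{k,j+1})`. -/
def collB (j : ℕ) (g : Phase (j + 1) → ℝ) : Phase j → ℝ :=
  fun z => ∑ k : Fin j, (collGain j k g z - collLoss j k g z)

/-- The hard-sphere Boltzmann collision operator `Q(f,f)`. -/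
def QHS (f : ℝ × V3 × V3 → ℝ) (t : ℝ) (x v : V3) : ℝ :=
  ∫ ν : sphere (0 : V3) 1, ∫ vs : V3,
    (if 0 ≤ ⟪(ν : V3), v - vs⟫ then
      ⟪(ν : V3), v - vs⟫ *
        (f (t, x, v - ⟪v - vs, (ν : V3)⟫ • (ν : V3)) *
            f (t, x, vs + ⟪v - vs, (ν : V3)⟫ • (ν : V3)) -
          f (t, x, v) * f (t, x, vs))
    else 0) ∂volume ∂sphereMeasure

/-! ### Gaussian integrability -/

lemma poly_exp_bound (k : ℕ) {ε : ℝ} (hε : 0 < ε) :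
    ∃ M : ℝ, 0 < M ∧ ∀ r : ℝ, 0 ≤ r → (1 + r) ^ k ≤ M * Real.exp (ε * r ^ 2) := by
  rcases Nat.eq_zero_or_pos k with rfl | hk
  · refine ⟨1, one_pos, fun r _ => ?_⟩
    simpa using Real.one_le_exp (by positivity)
  have hk' : (0 : ℝ) < k := by exact_mod_cast hk
  set s := ε / k with hs
  have hs0 : 0 < s := by positivity
  refine ⟨(2 + 1 / s) ^ k, by positivity, fun r hr => ?_⟩
  have h1 : 1 + r ≤ (2 + 1 / s) * Real.exp (s * r ^ 2) := by
    have h2 := Real.add_one_le_exp (s * r ^ 2)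
    have h3 : (2 + 1 / s) * (s * r ^ 2 + 1) ≤ (2 + 1 / s) * Real.exp (s * r ^ 2) := by
      gcongr
    have h4 : (2 + 1 / s) * (s * r ^ 2 + 1) = 2 * s * r ^ 2 + 2 + r ^ 2 + 1 / s := by
      field_simp
      ring
    have h5 : 0 ≤ 2 * s * r ^ 2 + 1 / s := by positivity
    nlinarith [sq_nonneg (r - 1)]
  calc (1 + r) ^ k ≤ ((2 + 1 / s) * Real.exp (s * r ^ 2)) ^ k := by gcongr
    _ = (2 + 1 / s) ^ k * Real.exp (ε * r ^ 2) := by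
      rw [mul_pow, ← Real.exp_nat_mul]
      congr 2
      rw [hs]; field_simp

lemma gauss_integrable {β : ℝ} (hβ : 0 < β) :
    Integrable (fun v : V3 => Real.exp (-β * ‖v‖ ^ 2)) := by
  have h := GaussianFourier.integrable_cexp_neg_mul_sq_norm_add (V := V3) (b := (β : ℂ))
    (by simpa using hβ) 0 0
  refine h.re.congr (Filter.Eventually.of_forall fun v => ?_)
  simp only [zero_mul, add_zero]
  rw [show (-(β : ℂ) * (‖v‖ : ℂ) ^ 2) = ((-β * ‖v‖ ^ 2 : ℝ) : ℂ) by push_cast; ring]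
  exact Complex.exp_ofReal_re _

lemma poly_gauss_integrable (k : ℕ) {β : ℝ} (hβ : 0 < β) :
    Integrable (fun v : V3 => (1 + ‖v‖) ^ k * Real.exp (-β * ‖v‖ ^ 2)) := by
  obtain ⟨M, hM, hb⟩ := poly_exp_bound k (half_pos hβ)
  refine ((gauss_integrable (half_pos hβ)).const_mul M).mono' (by fun_prop) ?_
  refine Filter.Eventually.of_forall fun v => ?_
  rw [Real.norm_of_nonneg (by positivity)]
  calc (1 + ‖v‖) ^ k * Real.exp (-β * ‖v‖ ^ 2)
      ≤ (M * Real.exp (β / 2 * ‖v‖ ^ 2)) * Real.exp (-β * ‖v‖ ^ 2) := by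
        gcongr; exact hb _ (norm_nonneg _)
    _ = M * Real.exp (-(β / 2) * ‖v‖ ^ 2) := by
        rw [mul_assoc, ← Real.exp_add]; congr 2; ring

/-! ### Symmetries of the collision kernel -/

instance : IsFiniteMeasure sphereMeasure := by unfold sphereMeasure; infer_instance

lemma sphere_neg_mp :
    MeasurePreserving (fun ν : sphere (0 : V3) 1 => -ν) sphereMeasure sphereMeasure := by
  refine ⟨continuous_neg.measurable, ?_⟩
  ext s hs
  have hs' : MeasurableSet ((fun ν : sphere (0 : V3) 1 => -ν) ⁻¹' s) :=
    continuous_neg.measurable hs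
  rw [Measure.map_apply continuous_neg.measurable hs, sphereMeasure,
    Measure.toSphere_apply' _ hs, Measure.toSphere_apply' _ hs']
  congr 1
  rw [← Measure.measure_neg]
  congr 1
  ext y
  simp only [Set.mem_neg, Set.mem_smul, Set.mem_image, Set.mem_preimage]
  constructor
  · rintro ⟨r, hr, _, ⟨ν, hν, rfl⟩, h⟩
    exact ⟨r, hr, _, ⟨-ν, hν, rfl⟩, by simp [h]⟩
  · rintro ⟨r, hr, _, ⟨ν, hν, rfl⟩, h⟩
    exact ⟨r, hr, _, ⟨-ν, by simpa using hν, rfl⟩, by simp [h]⟩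

/-- The collision map, as a linear map (with the outgoing particles exchanged). -/
def collMap (ν : V3) : V3 × V3 →ₗ[ℝ] V3 × V3 where
  toFun p := (p.2 + ⟪p.1 - p.2, ν⟫ • ν, p.1 - ⟪p.1 - p.2, ν⟫ • ν)
  map_add' p q := by
    ext i <;> simp [inner_sub_left, inner_add_left] <;> ring
  map_smul' r p := by
    ext i <;> simp [inner_sub_left, inner_smul_left] <;> ring

lemma collMap_fst (ν : V3) (p : V3 × V3) : (collMap ν p).1 = p.2 + ⟪p.1 - p.2, ν⟫ • ν := rfl
lemma collMap_snd (ν : V3) (p : V3 × V3) : (collMap ν p).2 = p.1 - ⟪p.1 - p.2, ν⟫ • ν := rfl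

lemma collMap_inner (ν : sphere (0 : V3) 1) (p : V3 × V3) :
    ⟪(collMap ν p).1 - (collMap ν p).2, (ν : V3)⟫ = ⟪p.1 - p.2, (ν : V3)⟫ := by
  have hν : ⟪(ν : V3), (ν : V3)⟫ = 1 := by
    rw [real_inner_self_eq_norm_sq]; simp
  rw [collMap_fst, collMap_snd]
  simp only [inner_sub_left, inner_add_left, real_inner_smul_left, hν]
  ring

lemma collMap_collMap (ν : sphere (0 : V3) 1) (p : V3 × V3) :
    collMap ν (collMap ν p) = p := by
  have h := collMap_inner ν p
  ext1
  · rw [collMap_fst, h, collMap_snd]; abel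
  · rw [collMap_snd, h, collMap_fst]; abel

lemma collMap_energy (ν : sphere (0 : V3) 1) (p : V3 × V3) :
    ‖(collMap ν p).1‖ ^ 2 + ‖(collMap ν p).2‖ ^ 2 = ‖p.1‖ ^ 2 + ‖p.2‖ ^ 2 := by
  have hν : ‖(ν : V3)‖ = 1 := by simp
  rw [collMap_fst, collMap_snd, norm_add_sq_real, norm_sub_sq_real]
  simp only [inner_sub_left, real_inner_smul_right, norm_smul, hν, Real.norm_eq_abs, mul_one,
    sq_abs]
  ring

lemma collMap_mp (ν : sphere (0 : V3) 1) :
    MeasurePreserving (collMap (ν : V3)) (volume : Measure (V3 × V3)) volume := by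
  have hcomp : (collMap (ν : V3)) * (collMap (ν : V3)) = 1 := by
    exact LinearMap.ext fun p => collMap_collMap ν p
  have hdet : LinearMap.det (collMap (ν : V3)) * LinearMap.det (collMap (ν : V3)) = 1 := by
    rw [← map_mul, hcomp, map_one]
  have habs : |LinearMap.det (collMap (ν : V3))| = 1 := by
    rcases mul_self_eq_one_iff.1 hdet with h | h <;> rw [h] <;> simp
  refine ⟨(collMap (ν : V3)).continuous_of_finiteDimensional.measurable, ?_⟩
  have : (volume : Measure (V3 × V3)).IsAddHaarMeasure := by
    rw [Measure.volume_eq_prod]; infer_instance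
  rw [Measure.map_linearMap_addHaar_eq_smul_addHaar]
  · rw [abs_inv, habs]; simp
  · intro h; rw [h] at hdet; simp at hdet

/-- The integrand of the collision operator for a fixed velocity profile. -/
def kern (φ : V3 → ℝ) (ν : V3) (p : V3 × V3) : ℝ :=
  if 0 ≤ ⟪ν, p.1 - p.2⟫ then
    ⟪ν, p.1 - p.2⟫ * (φ (p.1 - ⟪p.1 - p.2, ν⟫ • ν) * φ (p.2 + ⟪p.1 - p.2, ν⟫ • ν) -
      φ p.1 * φ p.2)
  else 0

lemma kern_eq (φ : V3 → ℝ) (ν : V3) (p : V3 × V3) :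
    kern φ ν p = max 0 ⟪p.1 - p.2, ν⟫ *
      (φ (collMap ν p).2 * φ (collMap ν p).1 - φ p.1 * φ p.2) := by
  unfold kern
  rw [collMap_fst, collMap_snd, real_inner_comm]
  split_ifs with h
  · rw [max_eq_right h]
  · rw [max_eq_left (not_le.1 h).le, zero_mul]

lemma kern_collMap (φ : V3 → ℝ) (ν : sphere (0 : V3) 1) (p : V3 × V3) :
    kern φ ν (collMap ν p) = - kern φ ν p := by
  rw [kern_eq, kern_eq, collMap_inner, collMap_collMap]
  ring

lemma kern_swap (φ : V3 → ℝ) (ν : V3) (p : V3 × V3) :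
    kern φ (-ν) p.swap = kern φ ν p := by
  rw [kern_eq, kern_eq]
  simp only [collMap_fst, collMap_snd, Prod.fst_swap, Prod.snd_swap, inner_neg_right, smul_neg,
    neg_smul, neg_neg]
  rw [show ⟪p.2 - p.1, ν⟫ = - ⟪p.1 - p.2, ν⟫ by rw [← inner_neg_left]; simp]
  simp only [neg_neg, neg_smul, sub_neg_eq_add, ← sub_eq_add_neg]
  ring

/-- Logarithm bound from two-sided Gaussian bounds. -/
lemma log_bound {y a b c r : ℝ} (ha : 0 < a) (hb : 0 ≤ b) (hr : 0 ≤ r)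
    (h1 : a * Real.exp (-b * r) ≤ y) (h2 : y ≤ c) :
    |Real.log y| ≤ (|Real.log a| + |Real.log c| + b) * (1 + r) := by
  have hy : 0 < y := lt_of_lt_of_le (by positivity) h1
  have l1 : Real.log a - b * r ≤ Real.log y := by
    have := Real.log_le_log (by positivity) h1
    rw [Real.log_mul ha.ne' (Real.exp_ne_zero _), Real.log_exp] at this
    linarith
  have l2 : Real.log y ≤ Real.log c := Real.log_le_log hy h2
  have e1 := neg_abs_le (Real.log a)
  have e2 := le_abs_self (Real.log c)
  have e3 := abs_nonneg (Real.log a)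
  have e4 := abs_nonneg (Real.log c)
  have e5 : 0 ≤ |Real.log a| * r := by positivity
  have e6 : 0 ≤ |Real.log c| * r := by positivity
  have e7 : 0 ≤ b * r := by positivity
  rw [abs_le]
  constructor <;> nlinarith

section collision
variable {φ : V3 → ℝ} {a b c β : ℝ}

lemma kern_abs_le (hφ : ∀ v, 0 < φ v) (hc : 0 < c)
    (hup : ∀ v, φ v ≤ c * Real.exp (-β * ‖v‖ ^ 2)) (ν : sphere (0 : V3) 1) (p : V3 × V3) :
    |kern φ ν p| ≤ (1 + ‖p.1‖) * (1 + ‖p.2‖) *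
      (c ^ 2 * (Real.exp (-β * ‖p.1‖ ^ 2) * Real.exp (-β * ‖p.2‖ ^ 2))) := by
  have key : ∀ u w : V3, φ u * φ w ≤ c ^ 2 * Real.exp (-β * (‖u‖ ^ 2 + ‖w‖ ^ 2)) := by
    intro u w
    calc φ u * φ w ≤ (c * Real.exp (-β * ‖u‖ ^ 2)) * (c * Real.exp (-β * ‖w‖ ^ 2)) :=
          mul_le_mul (hup u) (hup w) (hφ w).le (by positivity)
      _ = _ := by rw [mul_add, Real.exp_add]; ring
  have k1 := key p.1 p.2
  have k2 := key (collMap ν p).1 (collMap ν p).2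
  rw [collMap_energy] at k2
  have p1 : 0 < φ p.1 * φ p.2 := mul_pos (hφ _) (hφ _)
  have p2 : 0 < φ (collMap ν p).1 * φ (collMap ν p).2 := mul_pos (hφ _) (hφ _)
  rw [kern_eq, abs_mul, ← Real.exp_add, ← mul_add]
  refine mul_le_mul ?_ ?_ (abs_nonneg _) (by positivity)
  · rw [abs_of_nonneg (le_max_left _ _)]
    refine max_le (by positivity) ?_
    have h1 := real_inner_le_norm (p.1 - p.2) (ν : V3)
    have h2 : ‖(ν : V3)‖ = 1 := by simp
    rw [h2, mul_one] at h1
    have h3 := norm_sub_le p.1 p.2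
    nlinarith [norm_nonneg p.1, norm_nonneg p.2, mul_nonneg (norm_nonneg p.1) (norm_nonneg p.2)]
  · rw [abs_le]
    constructor <;> nlinarith

lemma collMap_cont : Continuous (fun q : V3 × (V3 × V3) => collMap q.1 q.2) := by
  unfold collMap
  simp only [LinearMap.coe_mk, AddHom.coe_mk]
  fun_prop

lemma kern_cont (hcont : Continuous φ) :
    Continuous (fun q : V3 × (V3 × V3) => kern φ q.1 q.2) := by
  simp only [kern_eq]
  have h1 := continuous_fst.comp collMap_cont
  have h2 := continuous_snd.comp collMap_cont
  simp only [Function.comp_def] at h1 h2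
  fun_prop

lemma kern_log_abs_le (hφ : ∀ v, 0 < φ v) (ha : 0 < a) (hb : 0 ≤ b) (hc : 0 < c) (hβ : 0 < β)
    (hlow : ∀ v, a * Real.exp (-b * ‖v‖ ^ 2) ≤ φ v)
    (hup : ∀ v, φ v ≤ c * Real.exp (-β * ‖v‖ ^ 2)) (ν : sphere (0 : V3) 1) (p : V3 × V3) :
    |kern φ ν p * Real.log (φ p.1)| ≤ (c ^ 2 * (|Real.log a| + |Real.log c| + b)) *
      (((1 + ‖p.1‖) ^ 3 * Real.exp (-β * ‖p.1‖ ^ 2)) *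
        ((1 + ‖p.2‖) ^ 1 * Real.exp (-β * ‖p.2‖ ^ 2))) := by
  have h1 := kern_abs_le hφ hc hup ν p
  have hupc : φ p.1 ≤ c := (hup _).trans <| by
    have : Real.exp (-β * ‖p.1‖ ^ 2) ≤ 1 := Real.exp_le_one_iff.2 (by nlinarith [sq_nonneg ‖p.1‖])
    nlinarith
  have h2 := log_bound ha hb (sq_nonneg ‖p.1‖) (hlow p.1) hupc
  have h3 : (1 + ‖p.1‖ ^ 2) ≤ (1 + ‖p.1‖) ^ 2 := by nlinarith [norm_nonneg p.1]
  have hL : 0 ≤ |Real.log a| + |Real.log c| + b := by positivity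
  rw [abs_mul]
  calc _ ≤ ((1 + ‖p.1‖) * (1 + ‖p.2‖) *
      (c ^ 2 * (Real.exp (-β * ‖p.1‖ ^ 2) * Real.exp (-β * ‖p.2‖ ^ 2)))) *
      ((|Real.log a| + |Real.log c| + b) * (1 + ‖p.1‖) ^ 2) :=
        mul_le_mul h1 (h2.trans (mul_le_mul_of_nonneg_left h3 hL)) (abs_nonneg _) (by positivity)
    _ = _ := by ring

set_option maxHeartbeats 1000000 in
/-- Boltzmann inequality: the entropy production of the collision operator has a sign. -/
lemma collision_nonpos (hcont : Continuous φ) (hφ : ∀ v, 0 < φ v) (ha : 0 < a) (hb : 0 ≤ b)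
    (hc : 0 < c) (hβ : 0 < β)
    (hlow : ∀ v, a * Real.exp (-b * ‖v‖ ^ 2) ≤ φ v)
    (hup : ∀ v, φ v ≤ c * Real.exp (-β * ‖v‖ ^ 2)) :
    ∫ v : V3, (∫ ν : sphere (0 : V3) 1, ∫ w : V3, kern φ ν (v, w) ∂volume ∂sphereMeasure) *
      Real.log (φ v) ≤ 0 := by
  have hbd := kern_log_abs_le hφ ha hb hc hβ hlow hup
  have hlogc : Continuous fun v => Real.log (φ v) := hcont.log fun v => (hφ v).ne'
  have hkc := kern_cont hcont
  set C := c ^ 2 * (|Real.log a| + |Real.log c| + b) with hC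
  have hg3 := poly_gauss_integrable 3 hβ
  have hg1 := poly_gauss_integrable 1 hβ
  -- joint integrability in `(ν, (v, w))`
  let F : sphere (0 : V3) 1 × (V3 × V3) → ℝ := fun q => kern φ q.1 q.2 * Real.log (φ q.2.1)
  have hFc : Continuous F := by
    refine Continuous.mul ?_ (hlogc.comp (by fun_prop))
    exact hkc.comp (by fun_prop : Continuous fun q : sphere (0 : V3) 1 × (V3 × V3) =>
      ((q.1 : V3), q.2))
  have hdom : Integrable (fun p : V3 × V3 => C * (((1 + ‖p.1‖) ^ 3 * Real.exp (-β * ‖p.1‖ ^ 2)) *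
        ((1 + ‖p.2‖) ^ 1 * Real.exp (-β * ‖p.2‖ ^ 2)))) (volume.prod volume) :=
    (hg3.mul_prod hg1).const_mul C
  have hFint : Integrable F (sphereMeasure.prod (volume.prod volume)) := by
    have := (integrable_const (μ := sphereMeasure) (1 : ℝ)).mul_prod hdom
    refine this.mono' hFc.aestronglyMeasurable (Filter.Eventually.of_forall fun q => ?_)
    rw [one_mul]
    exact hbd q.1 q.2
  have hJint : ∀ ν : sphere (0 : V3) 1,
      Integrable (fun p : V3 × V3 => kern φ ν p * Real.log (φ p.1)) := by
    intro ν
    refine hdom.mono' ?_ (Filter.Eventually.of_forall fun q => hbd ν q)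
    exact (hFc.comp (by fun_prop : Continuous fun p : V3 × V3 => (ν, p))).aestronglyMeasurable
  let J : sphere (0 : V3) 1 → ℝ := fun ν => ∫ p : V3 × V3, kern φ ν p * Real.log (φ p.1)
  have hJi : Integrable J sphereMeasure := hFint.integral_prod_left
  -- rewriting of the integral
  have hswap : ∫ v : V3, (∫ ν : sphere (0 : V3) 1, ∫ w : V3, kern φ ν (v, w) ∂volume
      ∂sphereMeasure) * Real.log (φ v) = ∫ ν, J ν ∂sphereMeasure := by
    have h1 : ∫ ν, J ν ∂sphereMeasure =
        ∫ ν : sphere (0 : V3) 1, ∫ v : V3, ∫ w : V3, kern φ ν (v, w) * Real.log (φ v)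
          ∂volume ∂volume ∂sphereMeasure := by
      refine integral_congr_ae (Filter.Eventually.of_forall fun ν => ?_)
      exact integral_prod _ (hJint ν)
    rw [h1, integral_integral_swap]
    · refine integral_congr_ae (Filter.Eventually.of_forall fun v => ?_)
      simp only [integral_mul_const]
    · have e := (measurePreserving_prodAssoc sphereMeasure (volume : Measure V3)
        (volume : Measure V3)).integrable_comp_of_integrable hFint
      exact e.integral_prod_left
  rw [hswap]
  -- symmetrisation
  have hneg : ∫ ν, J (-ν) ∂sphereMeasure = ∫ ν, J ν ∂sphereMeasure :=
    sphere_neg_mp.integral_comp (Homeomorph.neg _).measurableEmbedding J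
  have hJneg : Integrable (fun ν => J (-ν)) sphereMeasure :=
    sphere_neg_mp.integrable_comp_of_integrable hJi
  have hsum : ∀ ν, J ν + J (-ν) ≤ 0 := by
    intro ν
    have hmp := collMap_mp ν
    have hsw : MeasurePreserving (Prod.swap : V3 × V3 → V3 × V3) volume volume :=
      Measure.measurePreserving_swap
    have hemb : MeasurableEmbedding (collMap (ν : V3)) := by
      let e : V3 × V3 ≃ᵐ V3 × V3 :=
        { toFun := collMap (ν : V3)
          invFun := collMap (ν : V3)
          left_inv := collMap_collMap ν
          right_inv := collMap_collMap ν
          measurable_toFun := hmp.measurable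
          measurable_invFun := hmp.measurable }
      exact e.measurableEmbedding
    have i1 := hJint ν
    have i2 : Integrable (fun p : V3 × V3 => kern φ ν p * Real.log (φ (collMap ν p).1)) := by
      have := (hmp.integrable_comp_of_integrable i1).neg
      refine this.congr (Filter.Eventually.of_forall fun p => ?_)
      simp [kern_collMap]
    have j2 : ∫ p : V3 × V3, kern φ ν p * Real.log (φ (collMap ν p).1) = - J ν := by
      have h := hmp.integral_comp hemb (fun p => kern φ ν p * Real.log (φ p.1))
      rw [show J ν = _ from h.symm, ← integral_neg]
      refine integral_congr_ae (Filter.Eventually.of_forall fun p => ?_)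
      simp [kern_collMap]
    have i3 : Integrable (fun p : V3 × V3 => kern φ ν p * Real.log (φ p.2)) := by
      have := hsw.integrable_comp_of_integrable (hJint (-ν))
      refine this.congr (Filter.Eventually.of_forall fun p => ?_)
      simp [kern_swap]
    have j3 : ∫ p : V3 × V3, kern φ ν p * Real.log (φ p.2) = J (-ν) := by
      have h := hsw.integral_comp MeasurableEquiv.prodComm.measurableEmbedding
        (fun p => kern φ (-ν : sphere (0 : V3) 1) p * Real.log (φ p.1))
      rw [show J (-ν) = _ from h.symm]
      refine integral_congr_ae (Filter.Eventually.of_forall fun p => ?_)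
      simp [kern_swap]
    have i4 : Integrable (fun p : V3 × V3 => kern φ ν p * Real.log (φ (collMap ν p).2)) := by
      have := (hmp.integrable_comp_of_integrable i3).neg
      refine this.congr (Filter.Eventually.of_forall fun p => ?_)
      simp [kern_collMap]
    have j4 : ∫ p : V3 × V3, kern φ ν p * Real.log (φ (collMap ν p).2) = - J (-ν) := by
      have h := hmp.integral_comp hemb (fun p => kern φ ν p * Real.log (φ p.2))
      rw [← j3, ← h, ← integral_neg]
      refine integral_congr_ae (Filter.Eventually.of_forall fun p => ?_)
      simp [kern_collMap]
    have htot : ∫ p : V3 × V3, ((kern φ ν p * Real.log (φ p.1) +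
        kern φ ν p * Real.log (φ p.2)) - (kern φ ν p * Real.log (φ (collMap ν p).1) +
        kern φ ν p * Real.log (φ (collMap ν p).2))) = 2 * (J ν + J (-ν)) := by
      have e := integral_sub (i1.add i3) (i2.add i4)
      simp only [Pi.add_apply] at e
      rw [e, integral_add i1 i3, integral_add i2 i4, j2, j3, j4]
      simp only [J]
      ring
    have hle : ∫ p : V3 × V3, ((kern φ ν p * Real.log (φ p.1) +
        kern φ ν p * Real.log (φ p.2)) - (kern φ ν p * Real.log (φ (collMap ν p).1) +
        kern φ ν p * Real.log (φ (collMap ν p).2))) ≤ 0 := by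
      refine integral_nonpos fun p => ?_
      simp only [Pi.zero_apply]
      rw [← mul_add, ← mul_add, ← mul_sub, ← Real.log_mul (hφ _).ne' (hφ _).ne',
        ← Real.log_mul (hφ _).ne' (hφ _).ne', kern_eq, mul_comm (φ (collMap ν p).2), mul_assoc]
      refine mul_nonpos_of_nonneg_of_nonpos (le_max_left _ _) ?_
      have p1 : 0 < φ p.1 * φ p.2 := mul_pos (hφ _) (hφ _)
      have p2 : 0 < φ (collMap ν p).1 * φ (collMap ν p).2 := mul_pos (hφ _) (hφ _)
      rcases le_total (φ p.1 * φ p.2) (φ (collMap ν p).1 * φ (collMap ν p).2) with h | h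
      · have := Real.log_le_log p1 h
        exact mul_nonpos_of_nonneg_of_nonpos (by linarith) (by linarith)
      · have := Real.log_le_log p2 h
        exact mul_nonpos_of_nonpos_of_nonneg (by linarith) (by linarith)
    linarith
  have : ∫ ν, (J ν + J (-ν)) ∂sphereMeasure ≤ 0 := integral_nonpos hsum
  rw [integral_add hJi hJneg, hneg] at this
  linarith

end collision

/-- The integrable majorant on phase space. -/
def majorant (β : ℝ) (p : V3 × V3) : ℝ :=
  ((1 + ‖p.1‖) ^ 3 * Real.exp (-β * ‖p.1‖ ^ 2)) * ((1 + ‖p.2‖) ^ 3 * Real.exp (-β * ‖p.2‖ ^ 2))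

lemma majorant_integrable {β : ℝ} (hβ : 0 < β) : Integrable (majorant β) :=
  (poly_gauss_integrable 3 hβ).mul_prod (poly_gauss_integrable 3 hβ)

lemma majorant_bound {β c L A l : ℝ} {x v : V3} (hc : 0 < c) (hL : 0 ≤ L)
    (hA : |A| ≤ (1 + ‖v‖) * (c * Real.exp (-β * (‖x‖ ^ 2 + ‖v‖ ^ 2))))
    (hl : |l| ≤ L * (1 + (‖x‖ ^ 2 + ‖v‖ ^ 2))) :
    |A * l| ≤ (c * L) * majorant β (x, v) := by
  have hx := norm_nonneg x
  have hv := norm_nonneg v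
  have h1 : 1 + (‖x‖ ^ 2 + ‖v‖ ^ 2) ≤ (1 + ‖x‖) ^ 3 * (1 + ‖v‖) ^ 2 := by
    have a1 : 1 + ‖x‖ ^ 2 ≤ (1 + ‖x‖) ^ 3 := by nlinarith [pow_nonneg hx 2, pow_nonneg hx 3]
    have a2 : 1 + ‖v‖ ^ 2 ≤ (1 + ‖v‖) ^ 2 := by nlinarith
    calc 1 + (‖x‖ ^ 2 + ‖v‖ ^ 2) ≤ (1 + ‖x‖ ^ 2) * (1 + ‖v‖ ^ 2) := by
          nlinarith [mul_nonneg (pow_nonneg hx 2) (pow_nonneg hv 2)]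
      _ ≤ _ := by gcongr
  rw [abs_mul]
  calc |A| * |l| ≤ ((1 + ‖v‖) * (c * Real.exp (-β * (‖x‖ ^ 2 + ‖v‖ ^ 2)))) *
        (L * ((1 + ‖x‖) ^ 3 * (1 + ‖v‖) ^ 2)) :=
        mul_le_mul hA (hl.trans (mul_le_mul_of_nonneg_left h1 hL)) (abs_nonneg _) (by positivity)
    _ = _ := by
        rw [majorant, mul_add (-β), Real.exp_add]; ring

/-- The integral of a directional derivative of an integrable function vanishes. -/
lemma integral_dir_deriv_eq_zero {g : V3 → ℝ} {g' : V3 → (V3 →L[ℝ] ℝ)} {v : V3}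
    (hg : ∀ x, HasFDerivAt g (g' x) x) (hi : Integrable g)
    (hi' : Integrable (fun x => g' x v)) : ∫ x, g' x v = 0 := by
  have h := integral_bilinear_hasFDerivAt_right_eq_neg_left_of_integrable
    (μ := (volume : Measure V3)) (f := fun _ : V3 => (1 : ℝ)) (f' := fun _ => 0) (g := g)
    (g' := g') (v := v) (B := ContinuousLinearMap.mul ℝ ℝ)
    (by simp) (by simpa using hi') (by simpa using hi)
    (fun x _ => hasFDerivAt_const _ _) (fun x _ => hg x)
  simpa using h

set_option maxHeartbeats 1000000 in
/-- H-Theorem for the hard-sphere Boltzmann equation: if `f` is a strictly positive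
`C¹` solution of `∂_t f + v·∇_x f = Q(f,f)` sandwiched between Gaussians, with
Gaussian-bounded derivatives, then the `H`-functional
`H(f(t)) = ∫ f(t,x,v)[log f(t,x,v) − 1] dx dv` is well defined and nonincreasing on
`[0,T]`; in particular `H(f(t)) ≤ H(f(0))`. -/
theorem h_theorem (T : ℝ) (hT : 0 < T)
    (f : ℝ × V3 × V3 → ℝ)
    (hreg : ContDiffOn ℝ 1 f (Set.Icc 0 T ×ˢ (Set.univ : Set (V3 × V3))))
    (hpos : ∀ t ∈ Set.Icc (0 : ℝ) T, ∀ x v : V3, 0 < f (t, x, v))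
    (c₁ c₂ β₁ β₂ : ℝ) (hc₁ : 0 < c₁) (hc₁₂ : c₁ ≤ c₂) (hβ₂ : 0 < β₂) (hβ₁₂ : β₂ ≤ β₁)
    (hlow : ∀ t ∈ Set.Icc (0 : ℝ) T, ∀ x v : V3,
      c₁ * Real.exp (-β₁ * (‖x‖ ^ 2 + ‖v‖ ^ 2)) ≤ f (t, x, v))
    (hup : ∀ t ∈ Set.Icc (0 : ℝ) T, ∀ x v : V3,
      f (t, x, v) ≤ c₂ * Real.exp (-β₂ * (‖x‖ ^ 2 + ‖v‖ ^ 2)))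
    (hder : ∀ t ∈ Set.Icc (0 : ℝ) T, ∀ x v : V3,
      |deriv (fun s => f (s, x, v)) t| + ‖fderiv ℝ (fun y => f (t, y, v)) x‖ +
          ‖fderiv ℝ (fun w => f (t, x, w)) v‖ ≤
        c₂ * Real.exp (-β₂ * (‖x‖ ^ 2 + ‖v‖ ^ 2)))
    (hPDE : ∀ t ∈ Set.Ioo (0 : ℝ) T, ∀ x v : V3,
      deriv (fun s => f (s, x, v)) t + fderiv ℝ (fun y => f (t, y, v)) x v =
        QHS f t x v)
    (H : ℝ → ℝ)
    (hH : ∀ t, H t = ∫ p : V3 × V3, f (t, p.1, p.2) * (Real.log (f (t, p.1, p.2)) - 1)) :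
    (∀ t ∈ Set.Icc (0 : ℝ) T,
      Integrable (fun p : V3 × V3 => f (t, p.1, p.2) * (Real.log (f (t, p.1, p.2)) - 1))) ∧
    AntitoneOn H (Set.Icc 0 T) ∧
    ∀ t ∈ Set.Icc (0 : ℝ) T, H t ≤ H 0 := by
  have hc₂ : 0 < c₂ := hc₁.trans_le hc₁₂
  have hβ₁ : 0 < β₁ := hβ₂.trans_le hβ₁₂
  set L := |Real.log c₁| + |Real.log c₂| + β₁ with hLdef
  have hL : 0 ≤ L := by positivity
  have hlog : ∀ t ∈ Set.Icc (0 : ℝ) T, ∀ x v : V3,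
      |Real.log (f (t, x, v))| ≤ L * (1 + (‖x‖ ^ 2 + ‖v‖ ^ 2)) := by
    intro t ht x v
    refine log_bound hc₁ hβ₁.le (by positivity) (hlow t ht x v) ((hup t ht x v).trans ?_)
    have : Real.exp (-β₂ * (‖x‖ ^ 2 + ‖v‖ ^ 2)) ≤ 1 :=
      Real.exp_le_one_iff.2 (by nlinarith [sq_nonneg ‖x‖, sq_nonneg ‖v‖])
    nlinarith
  have hlog1 : ∀ t ∈ Set.Icc (0 : ℝ) T, ∀ x v : V3,
      |Real.log (f (t, x, v)) - 1| ≤ (L + 1) * (1 + (‖x‖ ^ 2 + ‖v‖ ^ 2)) := by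
    intro t ht x v
    have h1 := hlog t ht x v
    have h2 := abs_sub (Real.log (f (t, x, v))) 1
    rw [abs_one] at h2
    nlinarith [sq_nonneg ‖x‖, sq_nonneg ‖v‖]
  have hmaj := majorant_integrable hβ₂
  have hgpos : ∀ x v : V3, 0 ≤ c₂ * Real.exp (-β₂ * (‖x‖ ^ 2 + ‖v‖ ^ 2)) := fun x v => by
    positivity
  have hge : ∀ x v : V3, c₂ * Real.exp (-β₂ * (‖x‖ ^ 2 + ‖v‖ ^ 2)) ≤
      (1 + ‖v‖) * (c₂ * Real.exp (-β₂ * (‖x‖ ^ 2 + ‖v‖ ^ 2))) := fun x v => by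
    nlinarith [hgpos x v, norm_nonneg v, mul_nonneg (norm_nonneg v) (hgpos x v)]
  -- bounds
  have hB0 : ∀ t ∈ Set.Icc (0 : ℝ) T, ∀ p : V3 × V3,
      ‖f (t, p.1, p.2) * (Real.log (f (t, p.1, p.2)) - 1)‖ ≤
        (c₂ * (L + 1)) * majorant β₂ p := by
    intro t ht p
    refine majorant_bound hc₂ (by positivity) ?_ (hlog1 t ht p.1 p.2)
    rw [abs_of_pos (hpos t ht _ _)]
    exact (hup t ht _ _).trans (hge _ _)
  have hB1 : ∀ t ∈ Set.Icc (0 : ℝ) T, ∀ p : V3 × V3,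
      ‖deriv (fun s => f (s, p.1, p.2)) t * Real.log (f (t, p.1, p.2))‖ ≤
        (c₂ * L) * majorant β₂ p := by
    intro t ht p
    refine majorant_bound hc₂ hL ?_ (hlog t ht p.1 p.2)
    refine le_trans ?_ ((hder t ht p.1 p.2).trans (hge _ _))
    have e1 := norm_nonneg (fderiv ℝ (fun y => f (t, y, p.2)) p.1)
    have e2 := norm_nonneg (fderiv ℝ (fun w => f (t, p.1, w)) p.2)
    linarith
  have hB2 : ∀ t ∈ Set.Icc (0 : ℝ) T, ∀ p : V3 × V3,
      ‖fderiv ℝ (fun y => f (t, y, p.2)) p.1 p.2 * Real.log (f (t, p.1, p.2))‖ ≤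
        (c₂ * L) * majorant β₂ p := by
    intro t ht p
    refine majorant_bound hc₂ hL ?_ (hlog t ht p.1 p.2)
    have e0 := (fderiv ℝ (fun y => f (t, y, p.2)) p.1).le_opNorm p.2
    have e1 := abs_nonneg (deriv (fun s => f (s, p.1, p.2)) t)
    have e2 := norm_nonneg (fderiv ℝ (fun w => f (t, p.1, w)) p.2)
    have e3 : ‖fderiv ℝ (fun y => f (t, y, p.2)) p.1‖ ≤
        c₂ * Real.exp (-β₂ * (‖p.1‖ ^ 2 + ‖p.2‖ ^ 2)) := by
      have := hder t ht p.1 p.2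
      linarith
    rw [Real.norm_eq_abs] at e0
    refine e0.trans ?_
    rw [mul_comm]
    refine mul_le_mul (by linarith [norm_nonneg p.2]) e3 (norm_nonneg _) (by positivity)
  -- continuity
  have hfc : ContinuousOn f (Set.Icc 0 T ×ˢ (Set.univ : Set (V3 × V3))) := hreg.continuousOn
  have hcx : ∀ t ∈ Set.Icc (0 : ℝ) T, Continuous fun p : V3 × V3 => f (t, p.1, p.2) := by
    intro t ht
    exact hfc.comp_continuous (by fun_prop) fun p => ⟨ht, Set.mem_univ _⟩
  have hct : ∀ p : V3 × V3, ContinuousOn (fun t => f (t, p.1, p.2)) (Set.Icc 0 T) := by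
    intro p
    exact hfc.comp (by fun_prop) fun t ht => ⟨ht, Set.mem_univ _⟩
  have hclog : ∀ t ∈ Set.Icc (0 : ℝ) T,
      Continuous fun p : V3 × V3 => Real.log (f (t, p.1, p.2)) := fun t ht =>
    (hcx t ht).log fun p => (hpos t ht _ _).ne'
  have hF0c : ∀ t ∈ Set.Icc (0 : ℝ) T,
      Continuous fun p : V3 × V3 => f (t, p.1, p.2) * (Real.log (f (t, p.1, p.2)) - 1) :=
    fun t ht => (hcx t ht).mul ((hclog t ht).sub continuous_const)
  have hint : ∀ t ∈ Set.Icc (0 : ℝ) T,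
      Integrable (fun p : V3 × V3 => f (t, p.1, p.2) * (Real.log (f (t, p.1, p.2)) - 1)) :=
    fun t ht => (hmaj.const_mul _).mono' (hF0c t ht).aestronglyMeasurable
      (Filter.Eventually.of_forall (hB0 t ht))
  have hHfun : H = fun t => ∫ p : V3 × V3,
      f (t, p.1, p.2) * (Real.log (f (t, p.1, p.2)) - 1) := funext hH
  have hHcont : ContinuousOn H (Set.Icc 0 T) := by
    rw [hHfun]
    refine continuousOn_of_dominated (fun t ht => (hF0c t ht).aestronglyMeasurable)
      (fun t ht => Filter.Eventually.of_forall (hB0 t ht)) (hmaj.const_mul _)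
      (Filter.Eventually.of_forall fun p => ?_)
    exact (hct p).mul (((hct p).log fun t ht => (hpos t ht _ _).ne').sub continuousOn_const)
  -- interior differentiability
  have hIo : ∀ t ∈ Set.Ioo (0 : ℝ) T, t ∈ Set.Icc (0 : ℝ) T := fun t ht => ⟨ht.1.le, ht.2.le⟩
  have hop : IsOpen (Set.Ioo 0 T ×ˢ (Set.univ : Set (V3 × V3))) := isOpen_Ioo.prod isOpen_univ
  have hreg' : ContDiffOn ℝ 1 f (Set.Ioo 0 T ×ˢ (Set.univ : Set (V3 × V3))) :=
    hreg.mono (Set.prod_mono Set.Ioo_subset_Icc_self subset_rfl)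
  have hfd : ContinuousOn (fderiv ℝ f) (Set.Ioo 0 T ×ˢ (Set.univ : Set (V3 × V3))) :=
    hreg'.continuousOn_fderiv_of_isOpen hop le_rfl
  have hD : ∀ t ∈ Set.Ioo (0 : ℝ) T, ∀ x v : V3,
      HasFDerivAt f (fderiv ℝ f (t, x, v)) (t, x, v) := by
    intro t ht x v
    exact ((hreg'.differentiableOn one_ne_zero).differentiableAt
      (hop.mem_nhds ⟨ht, Set.mem_univ _⟩)).hasFDerivAt
  have hDt : ∀ t ∈ Set.Ioo (0 : ℝ) T, ∀ x v : V3,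
      HasDerivAt (fun s => f (s, x, v)) (fderiv ℝ f (t, x, v) (1, 0, 0)) t := by
    intro t ht x v
    have h2 : HasDerivAt (fun s : ℝ => (s, x, v)) ((1 : ℝ), (0 : V3), (0 : V3)) t :=
      (hasDerivAt_id t).prodMk ((hasDerivAt_const t x).prodMk (hasDerivAt_const t v))
    exact (hD t ht x v).comp_hasDerivAt t h2
  have hDx : ∀ t ∈ Set.Ioo (0 : ℝ) T, ∀ x v : V3,
      HasFDerivAt (fun y => f (t, y, v)) ((fderiv ℝ f (t, x, v)).comp
        ((0 : V3 →L[ℝ] ℝ).prod ((ContinuousLinearMap.id ℝ V3).prod (0 : V3 →L[ℝ] V3)))) x := by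
    intro t ht x v
    have h2 : HasFDerivAt (fun y : V3 => (t, y, v))
        ((0 : V3 →L[ℝ] ℝ).prod ((ContinuousLinearMap.id ℝ V3).prod (0 : V3 →L[ℝ] V3))) x :=
      (hasFDerivAt_const t x).prodMk ((hasFDerivAt_id x).prodMk (hasFDerivAt_const v x))
    exact (hD t ht x v).comp x h2
  have hDxc : ∀ t ∈ Set.Ioo (0 : ℝ) T,
      Continuous fun p : V3 × V3 => fderiv ℝ (fun y => f (t, y, p.2)) p.1 p.2 := by
    intro t ht
    have h1 : Continuous fun p : V3 × V3 => fderiv ℝ f (t, p.1, p.2) :=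
      hfd.comp_continuous (by fun_prop) fun p => ⟨ht, Set.mem_univ _⟩
    have h2 : Continuous fun p : V3 × V3 => fderiv ℝ f (t, p.1, p.2) ((0 : ℝ), p.2, (0 : V3)) :=
      h1.clm_apply (by fun_prop)
    refine h2.congr fun p => ?_
    rw [(hDx t ht p.1 p.2).fderiv]
    simp
  have hDtc : ∀ t ∈ Set.Ioo (0 : ℝ) T,
      Continuous fun p : V3 × V3 => deriv (fun s => f (s, p.1, p.2)) t := by
    intro t ht
    have h1 : Continuous fun p : V3 × V3 => fderiv ℝ f (t, p.1, p.2) :=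
      hfd.comp_continuous (by fun_prop) fun p => ⟨ht, Set.mem_univ _⟩
    have h2 : Continuous fun p : V3 × V3 =>
        fderiv ℝ f (t, p.1, p.2) ((1 : ℝ), (0 : V3), (0 : V3)) :=
      h1.clm_apply (by fun_prop)
    refine h2.congr fun p => ?_
    rw [(hDt t ht p.1 p.2).deriv]
  have hHder : ∀ t ∈ Set.Ioo (0 : ℝ) T, HasDerivAt H
      (∫ p : V3 × V3, deriv (fun s => f (s, p.1, p.2)) t * Real.log (f (t, p.1, p.2))) t := by
    intro t ht
    rw [hHfun]
    refine (hasDerivAt_integral_of_dominated_loc_of_deriv_le (s := Set.Ioo 0 T)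
      (F' := fun s (p : V3 × V3) =>
        deriv (fun s => f (s, p.1, p.2)) s * Real.log (f (s, p.1, p.2)))
      (bound := fun p => (c₂ * L) * majorant β₂ p)
      (isOpen_Ioo.mem_nhds ht) ?_ (hint t (hIo t ht)) ?_ ?_ (hmaj.const_mul _) ?_).2
    · filter_upwards [isOpen_Ioo.mem_nhds ht] with s hs
      exact (hF0c s (hIo s hs)).aestronglyMeasurable
    · exact ((hDtc t ht).mul (hclog t (hIo t ht))).aestronglyMeasurable
    · exact Filter.Eventually.of_forall fun p s hs => hB1 s (hIo s hs) p
    · refine Filter.Eventually.of_forall fun p s hs => ?_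
      have h1 := (hDt s hs p.1 p.2)
      rw [h1.deriv]
      have hne := (hpos s (hIo s hs) p.1 p.2).ne'
      have h2 := h1.mul ((h1.log hne).sub_const 1)
      refine h2.congr_deriv ?_
      field_simp
      ring
  have hnonpos : ∀ t ∈ Set.Ioo (0 : ℝ) T,
      ∫ p : V3 × V3, deriv (fun s => f (s, p.1, p.2)) t * Real.log (f (t, p.1, p.2)) ≤ 0 := by
    intro t ht
    have htI := hIo t ht
    have i1 : Integrable (fun p : V3 × V3 =>
        deriv (fun s => f (s, p.1, p.2)) t * Real.log (f (t, p.1, p.2))) :=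
      (hmaj.const_mul _).mono' ((hDtc t ht).mul (hclog t htI)).aestronglyMeasurable
        (Filter.Eventually.of_forall (hB1 t htI))
    have i2 : Integrable (fun p : V3 × V3 =>
        fderiv ℝ (fun y => f (t, y, p.2)) p.1 p.2 * Real.log (f (t, p.1, p.2))) :=
      (hmaj.const_mul _).mono' ((hDxc t ht).mul (hclog t htI)).aestronglyMeasurable
        (Filter.Eventually.of_forall (hB2 t htI))
    have heq : ∀ p : V3 × V3,
        deriv (fun s => f (s, p.1, p.2)) t * Real.log (f (t, p.1, p.2)) +
        fderiv ℝ (fun y => f (t, y, p.2)) p.1 p.2 * Real.log (f (t, p.1, p.2)) =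
        QHS f t p.1 p.2 * Real.log (f (t, p.1, p.2)) := by
      intro p
      rw [← add_mul, hPDE t ht]
    have i3 : Integrable (fun p : V3 × V3 => QHS f t p.1 p.2 * Real.log (f (t, p.1, p.2))) :=
      (i1.add i2).congr (Filter.Eventually.of_forall heq)
    -- the transport term
    have htr : ∫ p : V3 × V3,
        fderiv ℝ (fun y => f (t, y, p.2)) p.1 p.2 * Real.log (f (t, p.1, p.2)) = 0 := by
      rw [Measure.volume_eq_prod, integral_prod_symm _ i2]
      refine integral_eq_zero_of_ae ?_
      filter_upwards [Integrable.prod_left_ae i2, Integrable.prod_left_ae (hint t htI)]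
        with v hv1 hv2
      have hder' : ∀ x, HasFDerivAt
          (fun y : V3 => f (t, y, v) * (Real.log (f (t, y, v)) - 1))
          (Real.log (f (t, x, v)) • fderiv ℝ (fun y => f (t, y, v)) x) x := by
        intro x
        have h1 := (hDx t ht x v).differentiableAt.hasFDerivAt
        have hne := (hpos t htI x v).ne'
        have h2 := h1.mul ((h1.log hne).sub_const 1)
        refine h2.congr_fderiv ?_
        ext u
        simp
        field_simp
        ring
      have := integral_dir_deriv_eq_zero (v := v) hder' hv2
        (hv1.congr (Filter.Eventually.of_forall fun x => by simp [mul_comm]))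
      rw [Pi.zero_apply, ← this]
      refine integral_congr_ae (Filter.Eventually.of_forall fun x => ?_)
      simp [mul_comm]
    -- the collision term
    have hcoll : ∫ p : V3 × V3, QHS f t p.1 p.2 * Real.log (f (t, p.1, p.2)) ≤ 0 := by
      rw [Measure.volume_eq_prod, integral_prod _ i3]
      refine integral_nonpos fun x => ?_
      refine collision_nonpos (φ := fun v => f (t, x, v))
        (a := c₁ * Real.exp (-β₁ * ‖x‖ ^ 2)) (b := β₁) (c := c₂) (β := β₂)
        ((hcx t htI).comp (by fun_prop : Continuous fun v : V3 => (x, v)))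
        (fun v => hpos t htI x v) (by positivity) hβ₁.le hc₂ hβ₂ ?_ ?_
      · intro v
        refine le_trans (le_of_eq ?_) (hlow t htI x v)
        rw [mul_add, Real.exp_add]; ring
      · intro v
        refine (hup t htI x v).trans ?_
        gcongr c₂ * Real.exp ?_
        nlinarith [sq_nonneg ‖x‖]
    have hsum := integral_add i1 i2
    rw [htr, add_zero] at hsum
    rw [← hsum, integral_congr_ae (Filter.Eventually.of_forall heq)]
    exact hcoll
  have hanti : AntitoneOn H (Set.Icc 0 T) := by
    refine antitoneOn_of_deriv_nonpos (convex_Icc 0 T) hHcont ?_ ?_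
    · rw [interior_Icc]
      exact fun t ht => (hHder t ht).differentiableAt.differentiableWithinAt
    · rw [interior_Icc]
      intro t ht
      rw [(hHder t ht).deriv]
      exact hnonpos t ht
  exact ⟨hint, hanti, fun t ht => hanti ⟨le_rfl, hT.le⟩ ht ht.1⟩
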